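/- arXiv:1605.08115 — 6 statements merged into one kernel-verified Lean document; each statement's English description precedes it below -/
import Mathlib

section
/- Let L be a right Leibniz algebra over a field of characteristic ≠ 2, and suppose L is right nilpotent of index n, i.e. L^n = 0 where L^1 = L and L^{k+1} = span{bc : b ∈ L^k, c ∈ L}. Then L is strongly nilpotent of index at most 4n² − 2n + 1; that is, every product of 4n² − 2n + 1 (or more) elements of L, parenthesized in an arbitrary way, is zero. -/
open Classical

/-- The binary product `mul` is bilinear over `F`. -/
def IsBilin (F : Type*) [Field F] {L : Type*} [AddCommGroup L] [Module F L]
    (mul : L → L → L) : Prop :=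
  (∀ a b c : L, mul (a + b) c = mul a c + mul b c) ∧
  (∀ a b c : L, mul a (b + c) = mul a b + mul a c) ∧
  (∀ (r : F) (a b : L), mul (r • a) b = r • mul a b) ∧
  (∀ (r : F) (a b : L), mul a (r • b) = r • mul a b)

/-- The (right) Leibniz identity: `a(bc) = (ab)c - (ac)b`. -/
def IsRightLeibniz {L : Type*} [AddCommGroup L] (mul : L → L → L) : Prop :=
  ∀ a b c : L, mul a (mul b c) = mul (mul a b) c - mul (mul a c) b

/-- The left Leibniz identity: `a(bc) = (ab)c + b(ac)`. -/
def IsLeftLeibniz {L : Type*} [AddCommGroup L] (mul : L → L → L) : Prop :=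
  ∀ a b c : L, mul a (mul b c) = mul (mul a b) c + mul b (mul a c)

/-- `B` is a two-sided ideal: `xb ∈ B` and `bx ∈ B` for all `x ∈ L`, `b ∈ B`. -/
def IsIdeal {F : Type*} [Field F] {L : Type*} [AddCommGroup L] [Module F L]
    (mul : L → L → L) (B : Submodule F L) : Prop :=
  ∀ (x b : L), b ∈ B → mul x b ∈ B ∧ mul b x ∈ B

/-- `Ess F mul`: the two-sided ideal of `L` generated by the squares `{xx : x ∈ L}`. -/
def Ess (F : Type*) [Field F] {L : Type*} [AddCommGroup L] [Module F L]
    (mul : L → L → L) : Submodule F L :=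
  sInf {I : Submodule F L | (∀ x : L, mul x x ∈ I) ∧ IsIdeal mul I}

/-- The two-sided ideal of `L` generated by a subspace `S`. -/
def idealClosure (F : Type*) [Field F] {L : Type*} [AddCommGroup L] [Module F L]
    (mul : L → L → L) (S : Submodule F L) : Submodule F L :=
  sInf {I : Submodule F L | S ≤ I ∧ IsIdeal mul I}

/-- Right powers: `B^0 = L` (convention), `B^1 = B`,
`B^{n+1} = span {bc : b ∈ B^n, c ∈ B}`. -/
def rpow (F : Type*) [Field F] {L : Type*} [AddCommGroup L] [Module F L]
    (mul : L → L → L) (B : Submodule F L) : ℕ → Submodule F L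
  | 0 => ⊤
  | 1 => B
  | n + 2 => Submodule.span F
      {x : L | ∃ b ∈ rpow F mul B (n + 1), ∃ c ∈ B, x = mul b c}

/-- Left powers: `^0B = L` (convention), `^1B = B`,
`^{n+1}B = span {bc : b ∈ B, c ∈ ^nB}`. -/
def lpow (F : Type*) [Field F] {L : Type*} [AddCommGroup L] [Module F L]
    (mul : L → L → L) (B : Submodule F L) : ℕ → Submodule F L
  | 0 => ⊤
  | 1 => B
  | n + 2 => Submodule.span F
      {x : L | ∃ b ∈ B, ∃ c ∈ lpow F mul B (n + 1), x = mul b c}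

/-- The right-normed product `rightProd mul a [b₁, …, bₖ] = ((…(a b₁)…) bₖ)`,
with all parentheses associated to the left. -/
def rightProd {L : Type*} (mul : L → L → L) : L → List L → L
  | a, [] => a
  | a, b :: l => rightProd mul (mul a b) l

/-- `D_{(L,k)}`: the span of all right-normed products `d a_k ⋯ a_1`
with `d ∈ D` and `a_i ∈ L`. -/
def rightMulSpan (F : Type*) [Field F] {L : Type*} [AddCommGroup L] [Module F L]
    (mul : L → L → L) (D : Submodule F L) (k : ℕ) : Submodule F L :=
  Submodule.span F
    {x : L | ∃ d ∈ D, ∃ l : List L, l.length = k ∧ x = rightProd mul d l}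

/-- A formal nonassociative product (a word of elements of `L` parenthesized
in an arbitrary way). -/
inductive PTree (L : Type*) where
  | leaf : L → PTree L
  | node : PTree L → PTree L → PTree L

/-- Evaluation of a parenthesized product in `L`. -/
def PTree.eval {L : Type*} (mul : L → L → L) : PTree L → L
  | .leaf a => a
  | .node s t => mul (PTree.eval mul s) (PTree.eval mul t)

/-- The list of factors of a parenthesized product, in order. -/
def PTree.leaves {L : Type*} : PTree L → List L
  | .leaf a => [a]
  | .node s t => s.leaves ++ t.leaves

/-- The length (number of factors) of a parenthesized product. -/
def PTree.length {L : Type*} (t : PTree L) : ℕ := t.leaves.length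

/-- The weight of a parenthesized product with respect to `B`:
the number of its factors lying in `B`. -/
noncomputable def PTree.weight {F : Type*} [Field F] {L : Type*} [AddCommGroup L]
    [Module F L] (B : Submodule F L) (t : PTree L) : ℕ :=
  t.leaves.countP (fun y => decide (y ∈ B))

/-- `B^{⟨n⟩}`: the span of all products of elements of `L` of weight at least `n`
with respect to `B`. -/
noncomputable def weightSpan (F : Type*) [Field F] {L : Type*} [AddCommGroup L]
    [Module F L] (mul : L → L → L) (B : Submodule F L) (n : ℕ) : Submodule F L :=
  Submodule.span F
    {x : L | ∃ t : PTree L, n ≤ PTree.weight B t ∧ x = PTree.eval mul t}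

/-- `B^{{n}}`: the span of all length-`n` products all of whose factors lie in `B`. -/
def lengthSpanIn (F : Type*) [Field F] {L : Type*} [AddCommGroup L] [Module F L]
    (mul : L → L → L) (B : Submodule F L) (n : ℕ) : Submodule F L :=
  Submodule.span F
    {x : L | ∃ t : PTree L, PTree.length t = n ∧ (∀ a ∈ PTree.leaves t, a ∈ B) ∧
      x = PTree.eval mul t}

/-!
The Leibniz identity `a(bc) = (ab)c - (ac)b` trades a factor `bc` on the right for two successive
right multiplications, so by induction on `j` it gives `B^i B^j ⊆ B^{i+j}` for `i, j ≥ 1` (with the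
convention `B^0 = L` this would fail at `0`). Hence every parenthesization of `m` factors from `B`
lies in the right power `B^m`, and right nilpotency of index `n` is already strong nilpotency of
index `n`.
-/

theorem PTree.length_node {L : Type*} (s t : PTree L) :
    (PTree.node s t).length = s.length + t.length :=
  List.length_append

theorem PTree.length_pos {L : Type*} (t : PTree L) : 0 < t.length := by
  induction t with
  | leaf => exact Nat.one_pos
  | node s t hs _ => exact length_node s t ▸ Nat.add_pos_left hs t.length

section RightPowers

variable {F : Type*} [Field F] {L : Type*} [AddCommGroup L] [Module F L] {mul : L → L → L}

/-- The bilinear map underlying a bilinear product, giving access to `Submodule.map₂` for products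
of subspaces. -/
def IsBilin.toBilinMap (hbil : IsBilin F mul) : L →ₗ[F] L →ₗ[F] L :=
  LinearMap.mk₂ F mul hbil.1 hbil.2.2.1 hbil.2.1 hbil.2.2.2

theorem rpow_succ (hbil : IsBilin F mul) (B : Submodule F L) {n : ℕ} (hn : 1 ≤ n) :
    rpow F mul B (n + 1) = Submodule.map₂ hbil.toBilinMap (rpow F mul B n) B := by
  obtain ⟨k, rfl⟩ := Nat.exists_eq_add_of_le' hn
  rw [Submodule.map₂_eq_span_image2, rpow]
  congr 1
  ext x
  exact ⟨fun ⟨b, hb, c, hc, hx⟩ => ⟨b, hb, c, hc, hx.symm⟩,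
    fun ⟨b, hb, c, hc, hx⟩ => ⟨b, hb, c, hc, hx.symm⟩⟩

theorem mul_mem_rpow_succ (hbil : IsBilin F mul) {B : Submodule F L} {n : ℕ} (hn : 1 ≤ n) {a b : L}
    (ha : a ∈ rpow F mul B n) (hb : b ∈ B) : mul a b ∈ rpow F mul B (n + 1) := by
  rw [rpow_succ hbil B hn]
  exact Submodule.apply_mem_map₂ hbil.toBilinMap ha hb

theorem mul_mem_rpow_add (hbil : IsBilin F mul) (hleib : IsRightLeibniz mul) {B : Submodule F L}
    {i j : ℕ} (hi : 1 ≤ i) (hj : 1 ≤ j) {a x : L} (ha : a ∈ rpow F mul B i)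
    (hx : x ∈ rpow F mul B j) : mul a x ∈ rpow F mul B (i + j) := by
  induction j, hj using Nat.le_induction generalizing i a x with
  | base => exact mul_mem_rpow_succ hbil hi ha hx
  | succ j hj ih =>
    suffices rpow F mul B (j + 1) ≤
        (rpow F mul B (i + (j + 1))).comap (hbil.toBilinMap a) from this hx
    rw [rpow_succ hbil B hj, Submodule.map₂_le]
    intro b hb c hc
    change mul a (mul b c) ∈ rpow F mul B (i + (j + 1))
    have hab_c : mul (mul a b) c ∈ rpow F mul B (i + (j + 1)) :=
      mul_mem_rpow_succ hbil (Nat.le_add_right_of_le hi) (ih hi ha hb) hc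
    have hac_b : mul (mul a c) b ∈ rpow F mul B (i + (j + 1)) := by
      rw [← Nat.succ_add_eq_add_succ]
      exact ih (Nat.le_add_left 1 i) (mul_mem_rpow_succ hbil hi ha hc) hb
    rw [hleib]
    exact Submodule.sub_mem _ hab_c hac_b

theorem rpow_eq_bot_of_le (hbil : IsBilin F mul) {B : Submodule F L} {m n : ℕ} (hmn : m ≤ n)
    (hm : rpow F mul B m = ⊥) : rpow F mul B n = ⊥ := by
  induction n, hmn using Nat.le_induction with
  | base => exact hm
  | succ n _ ih =>
    obtain rfl | hn := Nat.eq_zero_or_pos n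
    · exact eq_bot_mono le_top ih
    · rw [rpow_succ hbil B hn, ih, Submodule.map₂_bot_left]

theorem PTree.eval_mem_rpow_length (hbil : IsBilin F mul) (hleib : IsRightLeibniz mul)
    {B : Submodule F L} {t : PTree L} (hB : ∀ a ∈ t.leaves, a ∈ B) :
    t.eval mul ∈ rpow F mul B t.length := by
  induction t with
  | leaf a => exact hB a List.mem_cons_self
  | node s t hs ht =>
    obtain ⟨hsB, htB⟩ := List.forall_mem_append.mp hB
    rw [length_node]
    exact mul_mem_rpow_add hbil hleib s.length_pos t.length_pos (hs hsB) (ht htB)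

theorem right_nilpotent_implies_strongly_nilpotent_general (hbil : IsBilin F mul)
    (hleib : IsRightLeibniz mul) {B : Submodule F L} {n : ℕ} (hnil : rpow F mul B n = ⊥)
    {t : PTree L} (hB : ∀ a ∈ t.leaves, a ∈ B) (hn : n ≤ t.length) : t.eval mul = 0 := by
  have hmem : t.eval mul ∈ rpow F mul B t.length := t.eval_mem_rpow_length hbil hleib hB
  rwa [rpow_eq_bot_of_le hbil hn hnil, Submodule.mem_bot] at hmem

end RightPowers

/-- A right Leibniz algebra that is right nilpotent of index `n`
is strongly nilpotent of index at most `4n² - 2n + 1`. -/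
theorem right_nilpotent_implies_strongly_nilpotent
    {F : Type*} [Field F] {L : Type*} [AddCommGroup L] [Module F L]
    (h2 : (2 : F) ≠ 0) (mul : L → L → L)
    (hbil : IsBilin F mul) (hleib : IsRightLeibniz mul)
    (n : ℕ) (hn : 1 ≤ n) (hnil : rpow F mul (⊤ : Submodule F L) n = ⊥) :
    ∀ t : PTree L, 4 * n ^ 2 - 2 * n + 1 ≤ PTree.length t →
      PTree.eval mul t = 0 := by
  intro t ht
  have hn_le : n ≤ 4 * n ^ 2 - 2 * n + 1 := by
    have := Nat.le_self_pow two_ne_zero n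
    omega
  exact right_nilpotent_implies_strongly_nilpotent_general hbil hleib hnil
    (fun _ _ => Submodule.mem_top) (hn_le.trans ht)
end

section
/- Let L be a left Leibniz algebra over a field of characteristic ≠ 2, and suppose L is left nilpotent of index n, i.e. ^nL = 0 where ^1L = L and ^{k+1}L = span{bc : b ∈ L, c ∈ ^kL}. Then L is strongly nilpotent of index at most 4n² − 2n + 1; that is, every product of 4n² − 2n + 1 (or more) elements of L, parenthesized in an arbitrary way, is zero. -/
open Classical

/-!
The left Leibniz identity, read as `(uv)x = u(vx) - v(ux)`, says that left multiplication by a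
product is the commutator of the left multiplications by its two factors. By induction, left
multiplication by a product of `m` elements of `B` raises the left power of `B` by `m`, so a product
of `m` elements of `B` lies in `^mB`. The left powers of a subalgebra decrease, so strong nilpotency
holds already with index `n`, which is at most `4n² - 2n + 1`.
-/

namespace PTree

variable {L : Type*}

theorem length_node_s1 (s t : PTree L) : (node s t).length = s.length + t.length :=
  List.length_append

theorem length_pos_s1 (t : PTree L) : 0 < t.length := by
  induction t with
  | leaf _ => exact Nat.one_pos
  | node s t ihs _ =>
    rw [length_node_s1]
    exact Nat.add_pos_left ihs _

theorem forall_mem_leaves_node {p : L → Prop} {s t : PTree L} :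
    (∀ a ∈ (node s t).leaves, p a) ↔ (∀ a ∈ s.leaves, p a) ∧ ∀ a ∈ t.leaves, p a :=
  List.forall_mem_append

end PTree

theorem IsLeftLeibniz.mul_mul_eq_sub {L : Type*} [AddCommGroup L] {mul : L → L → L}
    (hleib : IsLeftLeibniz mul) (a b c : L) :
    mul (mul a b) c = mul a (mul b c) - mul b (mul a c) :=
  eq_sub_of_add_eq (hleib a b c).symm

section LeftPowers

variable {F : Type*} [Field F] {L : Type*} [AddCommGroup L] [Module F L] {mul : L → L → L}
  {B : Submodule F L}

theorem mul_mem_lpow_succ {b c : L} {k : ℕ} (hk : 0 < k) (hb : b ∈ B)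
    (hc : c ∈ lpow F mul B k) : mul b c ∈ lpow F mul B (k + 1) := by
  obtain ⟨k, rfl⟩ := Nat.exists_eq_add_one.mpr hk
  exact Submodule.subset_span ⟨b, hb, c, hc, rfl⟩

theorem lpow_antitone (hB : ∀ b ∈ B, ∀ c ∈ B, mul b c ∈ B) : Antitone (lpow F mul B) := by
  refine antitone_nat_of_succ_le fun k => ?_
  induction k with
  | zero => exact le_top
  | succ k ih =>
    refine Submodule.span_le.mpr ?_
    rintro _ ⟨b, hb, c, hc, rfl⟩
    cases k with
    | zero => exact hB b hb c hc
    | succ k => exact mul_mem_lpow_succ k.succ_pos hb (ih hc)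

theorem eval_mul_mem_lpow (hleib : IsLeftLeibniz mul) {t : PTree L} (ht : ∀ a ∈ t.leaves, a ∈ B)
    {k : ℕ} (hk : 0 < k) {x : L} (hx : x ∈ lpow F mul B k) :
    mul (t.eval mul) x ∈ lpow F mul B (k + t.length) := by
  induction t generalizing k x with
  | leaf a => exact mul_mem_lpow_succ hk (ht a (List.mem_singleton_self a)) hx
  | node u v ihu ihv =>
    obtain ⟨hu, hv⟩ := PTree.forall_mem_leaves_node.mp ht
    have huv : mul (u.eval mul) (mul (v.eval mul) x) ∈ lpow F mul B (k + v.length + u.length) :=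
      ihu hu (Nat.add_pos_left hk _) (ihv hv hk hx)
    have hvu : mul (v.eval mul) (mul (u.eval mul) x) ∈ lpow F mul B (k + u.length + v.length) :=
      ihv hv (Nat.add_pos_left hk _) (ihu hu hk hx)
    rw [add_right_comm] at huv
    rw [PTree.eval, hleib.mul_mul_eq_sub, PTree.length_node_s1, ← add_assoc]
    exact sub_mem huv hvu

theorem eval_mem_lpow_length (hleib : IsLeftLeibniz mul) {t : PTree L}
    (ht : ∀ a ∈ t.leaves, a ∈ B) : t.eval mul ∈ lpow F mul B t.length := by
  induction t with
  | leaf a => exact ht a (List.mem_singleton_self a)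
  | node u v _ ihv =>
    obtain ⟨hu, hv⟩ := PTree.forall_mem_leaves_node.mp ht
    rw [PTree.length_node_s1, add_comm]
    exact eval_mul_mem_lpow hleib hu v.length_pos_s1 (ihv hv)

theorem left_nilpotent_implies_strongly_nilpotent_general (hleib : IsLeftLeibniz mul)
    (hB : ∀ b ∈ B, ∀ c ∈ B, mul b c ∈ B) {n : ℕ} (hnil : lpow F mul B n = ⊥)
    {t : PTree L} (ht : ∀ a ∈ t.leaves, a ∈ B) (hlen : n ≤ t.length) : t.eval mul = 0 := by
  have hmem : t.eval mul ∈ lpow F mul B n := lpow_antitone hB hlen (eval_mem_lpow_length hleib ht)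
  rwa [hnil, Submodule.mem_bot] at hmem

end LeftPowers

/-- A left Leibniz algebra that is left nilpotent of index `n`
is strongly nilpotent of index at most `4n² - 2n + 1`. -/
theorem left_nilpotent_implies_strongly_nilpotent
    {F : Type*} [Field F] {L : Type*} [AddCommGroup L] [Module F L]
    (h2 : (2 : F) ≠ 0) (mul : L → L → L)
    (hbil : IsBilin F mul) (hleib : IsLeftLeibniz mul)
    (n : ℕ) (hn : 1 ≤ n) (hnil : lpow F mul (⊤ : Submodule F L) n = ⊥) :
    ∀ t : PTree L, 4 * n ^ 2 - 2 * n + 1 ≤ PTree.length t →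
      PTree.eval mul t = 0 := by
  intro t ht
  have hn_sq : n ≤ n ^ 2 := Nat.le_self_pow two_ne_zero n
  exact left_nilpotent_implies_strongly_nilpotent_general hleib
    (fun _ _ _ _ => Submodule.mem_top) hnil (fun _ _ => Submodule.mem_top) (by omega)
end

section
/- Let L be a right Leibniz algebra over a field of characteristic ≠ 2, let m ≥ 2 be an integer, let a_1, …, a_m ∈ L, and let Q_0 ∈ L. Define the right-normed products P_i = a_m a_{m−1} ⋯ a_{i+1} for 1 ≤ i ≤ m−1 (so P_i = ((…(a_m a_{m−1})…)a_{i+2})a_{i+1}), with P_0 = a_m a_{m−1} ⋯ a_1, and define recursively Q_i = −Q_{i−1} a_i for 1 ≤ i ≤ m−1. Then Q_0 · P_0 = Σ_{i=1}^{m−1} (Q_{i−1} P_i) a_i + Q_{m−1} a_m. -/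
open Classical

/-!
Put `Rᵢ = Qᵢ Pᵢ`. The Leibniz identity applied to `Qᵢ₋₁ Pᵢ₋₁ = Qᵢ₋₁ (Pᵢ aᵢ)` reads
`Rᵢ₋₁ - Rᵢ = (Qᵢ₋₁ Pᵢ) aᵢ`, because the sign in `Qᵢ = -Qᵢ₋₁ aᵢ` absorbs the one in the identity.
Summing over `i` telescopes.
-/

section RightDistributive

variable {L : Type*} [AddCommGroup L] {mul : L → L → L}

theorem neg_mul_of_add_mul (hadd : ∀ x y z, mul (x + y) z = mul x z + mul y z) (x y : L) :
    mul (-x) y = -mul x y :=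
  map_neg (AddMonoidHom.mk' (mul · y) fun u v => hadd u v y) x

theorem IsRightLeibniz.mul_mul_sub_neg_mul (hleib : IsRightLeibniz mul)
    (hadd : ∀ x y z, mul (x + y) z = mul x z + mul y z) (q p b : L) :
    mul q (mul p b) - mul (-mul q b) p = mul (mul q p) b := by
  rw [hleib, neg_mul_of_add_mul hadd, sub_neg_eq_add, sub_add_cancel]

theorem rightProd_expansion_general (hadd : ∀ x y z, mul (x + y) z = mul x z + mul y z)
    (hleib : IsRightLeibniz mul) {n : ℕ} {a P Q : ℕ → L}
    (hPrec : ∀ i, i < n → P i = mul (P (i + 1)) (a (i + 1)))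
    (hQrec : ∀ i, 1 ≤ i → i ≤ n → Q i = -mul (Q (i - 1)) (a i)) :
    mul (Q 0) (P 0) =
      (∑ i ∈ Finset.Icc 1 n, mul (mul (Q (i - 1)) (P i)) (a i)) + mul (Q n) (P n) := by
  have hstep : ∀ i ∈ Finset.range n,
      mul (Q i) (P i) - mul (Q (i + 1)) (P (i + 1)) =
        mul (mul (Q i) (P (i + 1))) (a (i + 1)) := by
    intro i hi
    have hin : i < n := Finset.mem_range.mp hi
    rw [hPrec i hin, hQrec (i + 1) (Nat.le_add_left 1 i) hin, Nat.add_sub_cancel]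
    exact hleib.mul_mul_sub_neg_mul hadd _ _ _
  rw [← sub_eq_iff_eq_add]
  calc mul (Q 0) (P 0) - mul (Q n) (P n)
      = ∑ i ∈ Finset.range n, (mul (Q i) (P i) - mul (Q (i + 1)) (P (i + 1))) :=
        (Finset.sum_range_sub' (fun i => mul (Q i) (P i)) n).symm
    _ = ∑ i ∈ Finset.range n, mul (mul (Q i) (P (i + 1))) (a (i + 1)) :=
        Finset.sum_congr rfl hstep
    _ = ∑ i ∈ Finset.Icc 1 n, mul (mul (Q (i - 1)) (P i)) (a i) := by
        rw [Finset.range_eq_Ico, ← Finset.Ico_add_one_right_eq_Icc]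
        exact Finset.sum_Ico_add' (fun i => mul (mul (Q (i - 1)) (P i)) (a i)) 0 n 1

end RightDistributive

/-- `Q₀ P₀ = Σ_{i=1}^{m-1} (Q_{i-1} P_i) a_i + Q_{m-1} a_m`,
where `P_{m-1} = a_m`, `P_i = P_{i+1} a_{i+1}` and `Q_i = -Q_{i-1} a_i`. -/
theorem rightProd_expansion
    {F : Type*} [Field F] {L : Type*} [AddCommGroup L] [Module F L]
    (h2 : (2 : F) ≠ 0) (mul : L → L → L)
    (hbil : IsBilin F mul) (hleib : IsRightLeibniz mul)
    (m : ℕ) (hm : 2 ≤ m) (a : ℕ → L) (P Q : ℕ → L)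
    (hPtop : P (m - 1) = a m)
    (hPrec : ∀ i, i < m - 1 → P i = mul (P (i + 1)) (a (i + 1)))
    (hQrec : ∀ i, 1 ≤ i → i ≤ m - 1 → Q i = - mul (Q (i - 1)) (a i)) :
    mul (Q 0) (P 0) =
      (∑ i ∈ Finset.Icc 1 (m - 1), mul (mul (Q (i - 1)) (P i)) (a i)) +
        mul (Q (m - 1)) (a m) :=
  hPtop ▸ rightProd_expansion_general hbil.1 hleib hPrec hQrec
end

section
/- Let L be a right Leibniz algebra over a field of characteristic ≠ 2 and B a two-sided ideal of L. Then every product of m elements of L, parenthesized in an arbitrary way, at least n of whose factors belong to B, is a linear combination of right-normed products of length m each having at least n factors in B (the factors of each right-normed product being a permutation of the factors of the original product). -/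
open Classical

/-!
The Leibniz identity `z(uv) = (zu)v - (zv)u` replaces right multiplication by a product with right
multiplications by its two factors, in both orders. Hence right multiplication by any parenthesized
word is an integer combination of compositions of right multiplications by its factors, and the
factor in the leftmost position never moves.
-/

section RightNormed

variable {L : Type*} {mul : L → L → L}

theorem rightProd_append (a : L) (l₁ l₂ : List L) :
    rightProd mul a (l₁ ++ l₂) = rightProd mul (rightProd mul a l₁) l₂ := by
  induction l₁ generalizing a with
  | nil => rfl
  | cons b _ ih => exact ih (mul a b)

variable [AddCommGroup L]

/-- The integer combinations of right-normed products with first factor `a` whose remaining factors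
are those listed in `s`, in some order. It is an additive subgroup rather than a subspace because
no coefficients other than integers occur in the Leibniz identity. -/
def permRightProds (mul : L → L → L) (a : L) (s : List L) : AddSubgroup L :=
  AddSubgroup.closure {x | ∃ l : List L, l.Perm s ∧ x = rightProd mul a l}

theorem rightProd_mem_permRightProds {a : L} {l s : List L} (hl : l.Perm s) :
    rightProd mul a l ∈ permRightProds mul a s :=
  AddSubgroup.subset_closure ⟨l, hl, rfl⟩

theorem permRightProds_eq_of_perm (a : L) {s s' : List L} (hs : s.Perm s') :
    permRightProds mul a s = permRightProds mul a s' := by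
  simp only [permRightProds, hs.congr_right]

theorem mul_mem_permRightProds (hadd : ∀ a b c : L, mul (a + b) c = mul a c + mul b c)
    {a z : L} {s : List L} (hz : z ∈ permRightProds mul a s) (b : L) :
    mul z b ∈ permRightProds mul a (s ++ [b]) := by
  let mulRight : L →+ L := AddMonoidHom.mk' (mul · b) fun x y => hadd x y b
  suffices permRightProds mul a s ≤ (permRightProds mul a (s ++ [b])).comap mulRight from this hz
  refine (AddSubgroup.closure_le _).2 ?_
  rintro _ ⟨l, hl, rfl⟩
  change rightProd mul (rightProd mul a l) [b] ∈ permRightProds mul a (s ++ [b])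
  rw [← rightProd_append]
  exact rightProd_mem_permRightProds (hl.append_right [b])

namespace PTree

theorem mul_eval_mem_permRightProds (hadd : ∀ a b c : L, mul (a + b) c = mul a c + mul b c)
    (hleib : IsRightLeibniz mul) {a z : L} {s : List L} (hz : z ∈ permRightProds mul a s)
    (t : PTree L) : mul z (t.eval mul) ∈ permRightProds mul a (s ++ t.leaves) := by
  induction t generalizing z s with
  | leaf b => exact mul_mem_permRightProds hadd hz b
  | node u v ihu ihv =>
    have huv : mul (mul z (u.eval mul)) (v.eval mul) ∈
        permRightProds mul a (s ++ (u.leaves ++ v.leaves)) :=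
      List.append_assoc s _ _ ▸ ihv (ihu hz)
    have hvu : mul (mul z (v.eval mul)) (u.eval mul) ∈
        permRightProds mul a (s ++ (u.leaves ++ v.leaves)) := by
      rw [permRightProds_eq_of_perm a (List.perm_append_comm.append_left s), ← List.append_assoc]
      exact ihu (ihv hz)
    exact (hleib z (u.eval mul) (v.eval mul)).symm ▸ sub_mem huv hvu

theorem exists_leaves_eq_cons_and_eval_mem_permRightProds
    (hadd : ∀ a b c : L, mul (a + b) c = mul a c + mul b c) (hleib : IsRightLeibniz mul)
    (t : PTree L) :
    ∃ (a : L) (s : List L), t.leaves = a :: s ∧ t.eval mul ∈ permRightProds mul a s := by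
  induction t with
  | leaf a => exact ⟨a, [], rfl, rightProd_mem_permRightProds (List.Perm.refl [])⟩
  | node u v ihu _ =>
    obtain ⟨a, s, hleaves, hu⟩ := ihu
    exact ⟨a, s ++ v.leaves, congrArg (· ++ v.leaves) hleaves,
      mul_eval_mem_permRightProds hadd hleib hu v⟩

end PTree

theorem product_is_comb_of_rightProds_weight_general
    (hadd : ∀ a b c : L, mul (a + b) c = mul a c + mul b c) (hleib : IsRightLeibniz mul)
    {p : L → Bool} {n : ℕ} {t : PTree L} (ht : n ≤ t.leaves.countP p) :
    t.eval mul ∈ AddSubgroup.closure {x : L | ∃ (a : L) (l : List L),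
      (a :: l).Perm t.leaves ∧ n ≤ (a :: l).countP p ∧ x = rightProd mul a l} := by
  obtain ⟨a, s, hleaves, hmem⟩ := t.exists_leaves_eq_cons_and_eval_mem_permRightProds hadd hleib
  refine AddSubgroup.closure_mono ?_ hmem
  rintro _ ⟨l, hl, rfl⟩
  have hperm : (a :: l).Perm t.leaves := hleaves ▸ hl.cons a
  exact ⟨a, l, hperm, hperm.countP_eq p ▸ ht, rfl⟩

end RightNormed

/-- Every product of `m` elements of `L`, at least `n` of whose
factors lie in the ideal `B`, is a linear combination of right-normed products
whose factors are a permutation of the original ones (hence with at least `n`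
factors in `B`). -/
theorem product_is_comb_of_rightProds_weight
    {F : Type*} [Field F] {L : Type*} [AddCommGroup L] [Module F L]
    (h2 : (2 : F) ≠ 0) (mul : L → L → L)
    (hbil : IsBilin F mul) (hleib : IsRightLeibniz mul)
    (B : Submodule F L) (hB : IsIdeal mul B) (n : ℕ) :
    ∀ t : PTree L, n ≤ PTree.weight B t →
      PTree.eval mul t ∈
        Submodule.span F {x : L | ∃ (a : L) (l : List L),
          (a :: l).Perm (PTree.leaves t) ∧
          n ≤ (a :: l).countP (fun y => decide (y ∈ B)) ∧
          x = rightProd mul a l} := by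
  intro t ht
  exact (AddSubgroup.closure_le (Submodule.span F _).toAddSubgroup).2 Submodule.subset_span
    (product_is_comb_of_rightProds_weight_general hbil.1 hleib ht)
end

section
/- Let L be a right Leibniz algebra over a field of characteristic ≠ 2 and B ≠ {0} a two-sided ideal of L. Let P = a_m a_{m−1} ⋯ a_1 be a right-normed product of m elements of L of which at least n ≥ 1 belong to B. Then P belongs to B^n + Es(B), where B^n is the n-th right power of B and Es(B) = B ∩ Ess(L). -/
/-!
The Leibniz identity says exactly that right multiplications are derivations, and a derivation
preserving `B` preserves every power of `B` by the product rule. Hence, as a right-normed product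
is built up factor by factor, multiplying by an element of `B` raises the power of `B` containing
the partial product by one, while multiplying by any other element does not lower it.
-/

open Classical

section

variable {F : Type*} [Field F] {L : Type*} [AddCommGroup L] [Module F L] {mul : L → L → L}
  {B : Submodule F L}

/-- `D` is a derivation of the product `mul`. Mathlib's `Derivation` requires a commutative algebra
as its source, so the product rule is stated here for a bare, possibly nonassociative product. -/
def IsDerivation (mul : L → L → L) (D : Module.End F L) : Prop :=
  ∀ a b : L, D (mul a b) = mul (D a) b + mul a (D b)

/-- Right multiplication `x ↦ xy` of a bilinear product, as an endomorphism of the vector space,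
so that it can be treated as a derivation. -/
def IsBilin.mulRight (hbil : IsBilin F mul) (y : L) : Module.End F L where
  toFun x := mul x y
  map_add' a b := hbil.1 a b y
  map_smul' r a := hbil.2.2.1 r a y

theorem IsRightLeibniz.isDerivation_mulRight (hleib : IsRightLeibniz mul) (hbil : IsBilin F mul)
    (y : L) : IsDerivation mul (hbil.mulRight y) := by
  intro a b
  change mul (mul a b) y = mul (mul a y) b + mul a (mul b y)
  rw [hleib a b y, add_sub_cancel]

theorem rpow_antitone (hmul : ∀ b ∈ B, ∀ c ∈ B, mul b c ∈ B) : Antitone (rpow F mul B) := by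
  refine antitone_nat_of_succ_le fun n => ?_
  induction n with
  | zero => exact le_top
  | succ n ih =>
    cases n with
    | zero =>
      refine Submodule.span_le.2 ?_
      rintro _ ⟨b, hb, c, hc, rfl⟩
      exact hmul b hb c hc
    | succ n =>
      refine Submodule.span_mono ?_
      rintro _ ⟨b, hb, c, hc, rfl⟩
      exact ⟨b, ih hb, c, hc, rfl⟩

theorem IsDerivation.rpow_mem_invtSubmodule {D : Module.End F L} (hD : IsDerivation mul D)
    (hDB : B ∈ D.invtSubmodule) (n : ℕ) : rpow F mul B n ∈ D.invtSubmodule := by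
  induction n with
  | zero => exact Module.End.invtSubmodule.top_mem D
  | succ n ih =>
    cases n with
    | zero => exact hDB
    | succ n =>
      refine Submodule.span_le.2 ?_
      rintro _ ⟨b, hb, c, hc, rfl⟩
      change D (mul b c) ∈ rpow F mul B (n + 2)
      rw [hD b c]
      exact add_mem (Submodule.subset_span ⟨D b, ih hb, c, hc, rfl⟩)
        (Submodule.subset_span ⟨b, hb, D c, hDB hc, rfl⟩)

theorem mul_mem_rpow (hbil : IsBilin F mul) (hleib : IsRightLeibniz mul) (hB : IsIdeal mul B)
    {n : ℕ} {x : L} (hx : x ∈ rpow F mul B n) (y : L) : mul x y ∈ rpow F mul B n :=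
  have hyB : B ∈ (hbil.mulRight y).invtSubmodule := fun b hb => (hB y b hb).2
  (hleib.isDerivation_mulRight hbil y).rpow_mem_invtSubmodule hyB n hx

theorem mul_mem_rpow_succ_s9 (hB : ∀ x : L, ∀ b ∈ B, mul x b ∈ B) {n : ℕ} {x y : L}
    (hx : x ∈ rpow F mul B n) (hy : y ∈ B) : mul x y ∈ rpow F mul B (n + 1) := by
  cases n with
  | zero => exact hB x y hy
  | succ n => exact Submodule.subset_span ⟨x, hx, y, hy, rfl⟩

theorem rightProd_mem_rpow_add_countP (hbil : IsBilin F mul) (hleib : IsRightLeibniz mul)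
    (hB : IsIdeal mul B) {k : ℕ} {x : L} (hx : x ∈ rpow F mul B k) (l : List L) :
    rightProd mul x l ∈ rpow F mul B (k + l.countP (fun y => decide (y ∈ B))) := by
  induction l generalizing k x with
  | nil => exact hx
  | cons b l ih =>
    by_cases hb : b ∈ B
    · have hxb : mul x b ∈ rpow F mul B (k + 1) :=
        mul_mem_rpow_succ_s9 (fun x b hb => (hB x b hb).1) hx hb
      rw [List.countP_cons_of_pos (by simpa using hb), ← add_assoc, add_right_comm]
      exact ih hxb
    · rw [List.countP_cons_of_neg (by simpa using hb)]
      exact ih (mul_mem_rpow hbil hleib hB hx b)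

theorem rightProd_mem_rpow_sup_Es_general (hbil : IsBilin F mul) (hleib : IsRightLeibniz mul)
    (hB : IsIdeal mul B) {n : ℕ} {a : L} {l : List L}
    (hw : n ≤ (a :: l).countP (fun y => decide (y ∈ B))) :
    rightProd mul a l ∈ rpow F mul B n := by
  refine rpow_antitone (fun b _ c hc => (hB b c hc).1) hw ?_
  by_cases ha : a ∈ B
  · rw [List.countP_cons_of_pos (by simpa using ha), add_comm]
    exact rightProd_mem_rpow_add_countP hbil hleib hB (k := 1) ha l
  · rw [List.countP_cons_of_neg (by simpa using ha), ← zero_add (List.countP _ l)]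
    exact rightProd_mem_rpow_add_countP hbil hleib hB (k := 0) Submodule.mem_top l

end

/-- A right-normed product with at least `n ≥ 1` factors in the
nonzero ideal `B` belongs to `B^n + Es(B)`. -/
theorem rightProd_mem_rpow_sup_Es
    {F : Type*} [Field F] {L : Type*} [AddCommGroup L] [Module F L]
    (h2 : (2 : F) ≠ 0) (mul : L → L → L)
    (hbil : IsBilin F mul) (hleib : IsRightLeibniz mul)
    (B : Submodule F L) (hB : IsIdeal mul B) (hBne : B ≠ ⊥)
    (n : ℕ) (hn : 1 ≤ n) (a : L) (l : List L)
    (hw : n ≤ (a :: l).countP (fun y => decide (y ∈ B))) :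
    rightProd mul a l ∈ rpow F mul B n ⊔ (B ⊓ Ess F mul) :=
  Submodule.mem_sup_left (rightProd_mem_rpow_sup_Es_general hbil hleib hB hw)
end

section
/- Let L be a right Leibniz algebra over a field of characteristic ≠ 2 and B a two-sided ideal of L that is Es_{k'}-right nil for some integer k' ≥ 1. Then the following are equivalent: (i) B is right nilpotent (B^n = 0 for some n); (ii) B is nilpotent (B^{{n}} = 0 for some n); (iii) B is strongly nilpotent (B^{⟨n⟩} = 0 for some n). -/
open Classical

section

open Submodule

variable {F : Type*} [Field F] {L : Type*} [AddCommGroup L] [Module F L] {mul : L → L → L}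
  {B : Submodule F L}

/-- The product of the algebra as a bundled bilinear map, so that the product `PQ` of two subspaces
is `Submodule.map₂ hbil.toLinearMap₂ P Q`. -/
def IsBilin.toLinearMap₂ (hbil : IsBilin F mul) : L →ₗ[F] L →ₗ[F] L :=
  LinearMap.mk₂ F mul hbil.1 hbil.2.2.1 hbil.2.1 hbil.2.2.2

@[simp]
theorem IsBilin.toLinearMap₂_apply (hbil : IsBilin F mul) (a b : L) :
    hbil.toLinearMap₂ a b = mul a b :=
  rfl

namespace IsRightLeibniz

theorem map₂_map₂_right_le (hleib : IsRightLeibniz mul) (hbil : IsBilin F mul)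
    (P Q R : Submodule F L) :
    map₂ hbil.toLinearMap₂ P (map₂ hbil.toLinearMap₂ Q R) ≤
      map₂ hbil.toLinearMap₂ (map₂ hbil.toLinearMap₂ P Q) R ⊔
        map₂ hbil.toLinearMap₂ (map₂ hbil.toLinearMap₂ P R) Q := by
  refine map₂_le.2 fun a ha x hx => ?_
  rw [← mem_comap]
  refine map₂_le.2 (fun b hb c hc => ?_) hx
  simp only [mem_comap, IsBilin.toLinearMap₂_apply, hleib a b c]
  exact sub_mem (mem_sup_left (apply_mem_map₂ _ (apply_mem_map₂ _ ha hb) hc))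
    (mem_sup_right (apply_mem_map₂ _ (apply_mem_map₂ _ ha hc) hb))

theorem map₂_map₂_left_le (hleib : IsRightLeibniz mul) (hbil : IsBilin F mul)
    (P Q R : Submodule F L) :
    map₂ hbil.toLinearMap₂ (map₂ hbil.toLinearMap₂ P Q) R ≤
      map₂ hbil.toLinearMap₂ P (map₂ hbil.toLinearMap₂ Q R) ⊔
        map₂ hbil.toLinearMap₂ (map₂ hbil.toLinearMap₂ P R) Q := by
  rw [← map₂_flip _ (map₂ _ P Q)]
  refine map₂_le.2 fun c hc x hx => ?_
  rw [← mem_comap]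
  refine map₂_le.2 (fun a ha b hb => ?_) hx
  have right_mul_derivation : mul (mul a b) c = mul a (mul b c) + mul (mul a c) b := by
    rw [hleib a b c, sub_add_cancel]
  simp only [mem_comap, LinearMap.flip_apply, IsBilin.toLinearMap₂_apply, right_mul_derivation]
  exact add_mem (mem_sup_left (apply_mem_map₂ _ ha (apply_mem_map₂ _ hb hc)))
    (mem_sup_right (apply_mem_map₂ _ (apply_mem_map₂ _ ha hc) hb))

end IsRightLeibniz

theorem IsIdeal.map₂_top_left_le (hB : IsIdeal mul B) (hbil : IsBilin F mul) :
    map₂ hbil.toLinearMap₂ ⊤ B ≤ B :=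
  map₂_le.2 fun a _ b hb => (hB a b hb).1

theorem IsIdeal.map₂_top_right_le (hB : IsIdeal mul B) (hbil : IsBilin F mul) :
    map₂ hbil.toLinearMap₂ B ⊤ ≤ B :=
  map₂_le.2 fun b hb a _ => (hB a b hb).2

theorem rpow_add_two (hbil : IsBilin F mul) (B : Submodule F L) (n : ℕ) :
    rpow F mul B (n + 2) = map₂ hbil.toLinearMap₂ (rpow F mul B (n + 1)) B := by
  rw [map₂_eq_span_image2, rpow]
  congr 1
  ext x
  simp only [Set.mem_ofPred_eq, Set.mem_image2, SetLike.mem_coe, IsBilin.toLinearMap₂_apply,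
    eq_comm]

theorem map₂_rpow_self_le (hbil : IsBilin F mul) (hB : IsIdeal mul B) :
    ∀ n, map₂ hbil.toLinearMap₂ (rpow F mul B n) B ≤ rpow F mul B (n + 1)
  | 0 => hB.map₂_top_left_le hbil
  | n + 1 => (rpow_add_two hbil B n).ge

theorem map₂_rpow_top_le (hbil : IsBilin F mul) (hleib : IsRightLeibniz mul)
    (hB : IsIdeal mul B) :
    ∀ n, map₂ hbil.toLinearMap₂ (rpow F mul B n) ⊤ ≤ rpow F mul B n
  | 0 => le_top
  | 1 => hB.map₂_top_right_le hbil
  | n + 2 => by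
    rw [rpow_add_two hbil]
    exact (hleib.map₂_map₂_left_le hbil _ _ _).trans <| sup_le
      (map₂_le_map₂_right (hB.map₂_top_right_le hbil))
      (map₂_le_map₂_left (map₂_rpow_top_le hbil hleib hB (n + 1)))

theorem rpow_antitone_s15 (hbil : IsBilin F mul) (hleib : IsRightLeibniz mul) (hB : IsIdeal mul B) :
    Antitone (rpow F mul B) := by
  refine antitone_nat_of_succ_le fun n => ?_
  cases n with
  | zero => exact le_top
  | succ n =>
    calc rpow F mul B (n + 2)
      _ = map₂ hbil.toLinearMap₂ (rpow F mul B (n + 1)) B := rpow_add_two hbil B n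
      _ ≤ map₂ hbil.toLinearMap₂ (rpow F mul B (n + 1)) ⊤ := map₂_le_map₂_right le_top
      _ ≤ rpow F mul B (n + 1) := map₂_rpow_top_le hbil hleib hB (n + 1)

theorem map₂_rpow_rpow_le (hbil : IsBilin F mul) (hleib : IsRightLeibniz mul)
    (hB : IsIdeal mul B) (m : ℕ) :
    ∀ n, map₂ hbil.toLinearMap₂ (rpow F mul B m) (rpow F mul B n) ≤ rpow F mul B (m + n)
  | 0 => map₂_rpow_top_le hbil hleib hB m
  | 1 => map₂_rpow_self_le hbil hB m
  | n + 2 => by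
    have mul_right_power :
        map₂ hbil.toLinearMap₂ (map₂ hbil.toLinearMap₂ (rpow F mul B m) (rpow F mul B (n + 1))) B ≤
          rpow F mul B (m + (n + 2)) :=
      (map₂_le_map₂_left (map₂_rpow_rpow_le hbil hleib hB m (n + 1))).trans
        (map₂_rpow_self_le hbil hB (m + (n + 1)))
    have mul_left_power :
        map₂ hbil.toLinearMap₂ (map₂ hbil.toLinearMap₂ (rpow F mul B m) B) (rpow F mul B (n + 1)) ≤
          rpow F mul B (m + (n + 2)) := by
      rw [show m + (n + 2) = m + 1 + (n + 1) by omega]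
      exact (map₂_le_map₂_left (map₂_rpow_self_le hbil hB m)).trans
        (map₂_rpow_rpow_le hbil hleib hB (m + 1) (n + 1))
    rw [rpow_add_two hbil B n]
    exact (hleib.map₂_map₂_right_le hbil _ _ _).trans (sup_le mul_right_power mul_left_power)

namespace PTree

theorem weight_node (B : Submodule F L) (s t : PTree L) :
    (node s t).weight B = s.weight B + t.weight B :=
  List.countP_append

theorem weight_eq_length {t : PTree L} (ht : ∀ a ∈ t.leaves, a ∈ B) : t.weight B = t.length :=
  List.countP_eq_length.2 fun a ha => decide_eq_true (ht a ha)

theorem eval_mem_rpow_weight (hbil : IsBilin F mul) (hleib : IsRightLeibniz mul)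
    (hB : IsIdeal mul B) (t : PTree L) : t.eval mul ∈ rpow F mul B (t.weight B) := by
  induction t with
  | leaf a =>
    by_cases ha : a ∈ B
    · have weight_leaf : (leaf a).weight B = 1 := by simp [weight, leaves, ha]
      rw [weight_leaf]
      exact ha
    · have weight_leaf : (leaf a).weight B = 0 := by simp [weight, leaves, ha]
      rw [weight_leaf]
      exact mem_top
  | node s t hs ht =>
    rw [weight_node]
    exact map₂_rpow_rpow_le hbil hleib hB _ _ (apply_mem_map₂ hbil.toLinearMap₂ hs ht)

end PTree

theorem weightSpan_le_rpow (hbil : IsBilin F mul) (hleib : IsRightLeibniz mul)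
    (hB : IsIdeal mul B) (n : ℕ) : weightSpan F mul B n ≤ rpow F mul B n := by
  refine span_le.2 ?_
  rintro _ ⟨t, ht, rfl⟩
  exact rpow_antitone_s15 hbil hleib hB ht (t.eval_mem_rpow_weight hbil hleib hB)

theorem lengthSpanIn_le_weightSpan (mul : L → L → L) (B : Submodule F L) (n : ℕ) :
    lengthSpanIn F mul B n ≤ weightSpan F mul B n := by
  refine span_mono ?_
  rintro _ ⟨t, rfl, ht, rfl⟩
  exact ⟨t, (PTree.weight_eq_length ht).ge, rfl⟩

theorem le_lengthSpanIn_one (mul : L → L → L) (B : Submodule F L) :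
    B ≤ lengthSpanIn F mul B 1 :=
  fun b hb => subset_span ⟨.leaf b, rfl, fun _ ha => List.mem_singleton.1 ha ▸ hb, rfl⟩

theorem map₂_lengthSpanIn_le (hbil : IsBilin F mul) (B : Submodule F L) (m n : ℕ) :
    map₂ hbil.toLinearMap₂ (lengthSpanIn F mul B m) (lengthSpanIn F mul B n) ≤
      lengthSpanIn F mul B (m + n) := by
  rw [lengthSpanIn, lengthSpanIn, map₂_span_span]
  refine span_mono ?_
  rintro _ ⟨_, ⟨s, rfl, hs, rfl⟩, _, ⟨t, rfl, ht, rfl⟩, rfl⟩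
  exact ⟨.node s t, PTree.length_node s t,
    fun a ha => (List.mem_append.1 ha).elim (hs a) (ht a), rfl⟩

theorem rpow_succ_le_lengthSpanIn (hbil : IsBilin F mul) (B : Submodule F L) :
    ∀ n, rpow F mul B (n + 1) ≤ lengthSpanIn F mul B (n + 1)
  | 0 => le_lengthSpanIn_one mul B
  | n + 1 => by
    rw [rpow_add_two hbil]
    exact (map₂_le_map₂ (rpow_succ_le_lengthSpanIn hbil B n) (le_lengthSpanIn_one mul B)).trans
      (map₂_lengthSpanIn_le hbil B (n + 1) 1)

theorem rpow_le_weightSpan (hbil : IsBilin F mul) (B : Submodule F L) :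
    ∀ n, rpow F mul B n ≤ weightSpan F mul B n
  | 0 => fun a _ => subset_span ⟨.leaf a, Nat.zero_le _, rfl⟩
  | n + 1 => (rpow_succ_le_lengthSpanIn hbil B n).trans (lengthSpanIn_le_weightSpan mul B (n + 1))

theorem weightSpan_eq_rpow (hbil : IsBilin F mul) (hleib : IsRightLeibniz mul)
    (hB : IsIdeal mul B) (n : ℕ) : weightSpan F mul B n = rpow F mul B n :=
  (weightSpan_le_rpow hbil hleib hB n).antisymm (rpow_le_weightSpan hbil B n)

theorem lengthSpanIn_eq_rpow (hbil : IsBilin F mul) (hleib : IsRightLeibniz mul)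
    (hB : IsIdeal mul B) {n : ℕ} (hn : 1 ≤ n) : lengthSpanIn F mul B n = rpow F mul B n := by
  obtain ⟨k, rfl⟩ := Nat.exists_eq_add_of_le' hn
  exact ((lengthSpanIn_le_weightSpan mul B _).trans (weightSpan_le_rpow hbil hleib hB _)).antisymm
    (rpow_succ_le_lengthSpanIn hbil B k)

theorem nilpotency_equivalences_ideal_general (hbil : IsBilin F mul) (hleib : IsRightLeibniz mul)
    (hB : IsIdeal mul B) :
    ((∃ n, 1 ≤ n ∧ rpow F mul B n = ⊥) ↔ (∃ n, 1 ≤ n ∧ lengthSpanIn F mul B n = ⊥)) ∧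
    ((∃ n, 1 ≤ n ∧ lengthSpanIn F mul B n = ⊥) ↔ (∃ n, 1 ≤ n ∧ weightSpan F mul B n = ⊥)) := by
  constructor <;> refine exists_congr fun n => and_congr_right fun hn => ?_
  · rw [lengthSpanIn_eq_rpow hbil hleib hB hn]
  · rw [lengthSpanIn_eq_rpow hbil hleib hB hn, weightSpan_eq_rpow hbil hleib hB n]

end

/-- For an `Es_{k'}`-right nil ideal `B`, right nilpotency,
nilpotency and strong nilpotency are equivalent. -/
theorem nilpotency_equivalences_ideal
    {F : Type*} [Field F] {L : Type*} [AddCommGroup L] [Module F L]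
    (h2 : (2 : F) ≠ 0) (mul : L → L → L)
    (hbil : IsBilin F mul) (hleib : IsRightLeibniz mul)
    (B : Submodule F L) (hB : IsIdeal mul B)
    (k' : ℕ) (hk' : 1 ≤ k')
    (hnil : rightMulSpan F mul (B ⊓ Ess F mul) k' = ⊥) :
    ((∃ n, 1 ≤ n ∧ rpow F mul B n = ⊥) ↔
        (∃ n, 1 ≤ n ∧ lengthSpanIn F mul B n = ⊥)) ∧
    ((∃ n, 1 ≤ n ∧ lengthSpanIn F mul B n = ⊥) ↔
        (∃ n, 1 ≤ n ∧ weightSpan F mul B n = ⊥)) :=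
  nilpotency_equivalences_ideal_general hbil hleib hB
end
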